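/- Let (Ω, F, P) be a probability space with a filtration (F_k)_{k∈ℕ}, let (v_k)_{k∈ℕ} be a sequence of nonnegative, integrable, adapted real-valued random variables, let (x_k)_{k∈ℕ} be a sequence of adapted random vectors with values in ℝ^m, and let v̄, ā : [0, ∞) → [0, ∞) be continuous, strictly increasing functions with v̄(0) = ā(0) = 0. Assume the discrete Lyapunov drift condition E[v_{k+1} | F_k] ≤ v_k − ā(‖x_k‖) almost surely for every k, and assume v̄(‖x_k‖) ≤ v_k almost surely for every k. Then for every ε > 0, lim_{N→∞} P( sup_{k ≥ N} ‖x_k‖ > ε ) = 0. -/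

import Mathlib

open MeasureTheory Filter

/-- Discrete-time core of Theorem 2 (asymptotic stochastic stability): the drift
condition `E[v_{k+1} | ℱ_k] ≤ v_k - ā(‖x_k‖)` together with the lower bound
`v̄(‖x_k‖) ≤ v_k`, for continuous strictly increasing `v̄, ā : [0,∞) → [0,∞)`
vanishing at `0`, yields `lim_{N→∞} P(sup_{k ≥ N} ‖x_k‖ > ε) = 0` for every `ε > 0`. -/
theorem asymptotic_stochastic_stability
    {Ω : Type*} {m0 : MeasurableSpace Ω} {μ : Measure Ω} [IsProbabilityMeasure μ]
    (ℱ : Filtration ℕ m0) {m : ℕ}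
    (v : ℕ → Ω → ℝ)
    (hv_nonneg : ∀ k, 0 ≤ᵐ[μ] v k) (hv_int : ∀ k, Integrable (v k) μ)
    (hv_adapted : Adapted ℱ v)
    (x : ℕ → Ω → EuclideanSpace ℝ (Fin m)) (hx_adapted : Adapted ℱ x)
    (vbar abar : ℝ → ℝ)
    (hvbar_cont : ContinuousOn vbar (Set.Ici 0))
    (hvbar_mono : StrictMonoOn vbar (Set.Ici 0))
    (hvbar_nonneg : ∀ r, 0 ≤ r → 0 ≤ vbar r)
    (hvbar_zero : vbar 0 = 0)
    (habar_cont : ContinuousOn abar (Set.Ici 0))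
    (habar_mono : StrictMonoOn abar (Set.Ici 0))
    (habar_nonneg : ∀ r, 0 ≤ r → 0 ≤ abar r)
    (habar_zero : abar 0 = 0)
    (hdrift : ∀ k, ∀ᵐ ω ∂μ, (μ[v (k + 1) | ℱ k]) ω ≤ v k ω - abar ‖x k ω‖)
    (hbound : ∀ k, ∀ᵐ ω ∂μ, vbar ‖x k ω‖ ≤ v k ω) :
    ∀ ε : ℝ, 0 < ε →
      Tendsto (fun N : ℕ => μ {ω | ∃ k ≥ N, ε < ‖x k ω‖}) atTop (nhds 0) := by
  intro ε hε
  have hc : 0 < abar ε := by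
    have := habar_mono (Set.mem_Ici.2 le_rfl) (Set.mem_Ici.2 hε.le) hε
    rwa [habar_zero] at this
  let A : ℕ → Set Ω := fun k => {ω | ε < ‖x k ω‖}
  have hA : ∀ k, MeasurableSet (A k) := fun k =>
    measurableSet_lt measurable_const (((hx_adapted k).mono (ℱ.le k) le_rfl).norm)
  have hstep : ∀ k, abar ε * μ.real (A k) ≤ ∫ ω, v k ω ∂μ - ∫ ω, v (k + 1) ω ∂μ := by
    intro k
    have h1 : ∫ ω, (A k).indicator (fun _ => abar ε) ω ∂μ = abar ε * μ.real (A k) := by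
      rw [integral_indicator_const _ (hA k), smul_eq_mul, mul_comm]
    have h2 : ∫ ω, (v k ω - (μ[v (k + 1) | ℱ k]) ω) ∂μ
        = ∫ ω, v k ω ∂μ - ∫ ω, v (k + 1) ω ∂μ := by
      rw [integral_sub (hv_int k) integrable_condExp, integral_condExp (ℱ.le k)]
    rw [← h1, ← h2]
    refine integral_mono_ae ((integrable_const _).indicator (hA k))
      ((hv_int k).sub integrable_condExp) ?_
    filter_upwards [hdrift k] with ω hω
    by_cases h : ω ∈ A k
    · rw [Set.indicator_of_mem h]
      have : abar ε ≤ abar ‖x k ω‖ :=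
        habar_mono.monotoneOn (Set.mem_Ici.2 hε.le) (Set.mem_Ici.2 (norm_nonneg _)) (le_of_lt h)
      linarith
    · rw [Set.indicator_of_notMem h]
      have := habar_nonneg ‖x k ω‖ (norm_nonneg _)
      linarith
  have hsum : ∀ n, abar ε * ∑ k ∈ Finset.range n, μ.real (A k)
      ≤ ∫ ω, v 0 ω ∂μ - ∫ ω, v n ω ∂μ := by
    intro n
    induction n with
    | zero => simp
    | succ n ih =>
      rw [Finset.sum_range_succ, mul_add]
      linarith [hstep n]
  have hS : Summable (fun k => μ.real (A k)) := by
    refine summable_of_sum_range_le (c := (∫ ω, v 0 ω ∂μ) / abar ε)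
      (fun _ => measureReal_nonneg) (fun n => ?_)
    rw [le_div_iff₀ hc, mul_comm]
    have := integral_nonneg_of_ae (hv_nonneg n)
    linarith [hsum n]
  have hT : ∑' k, μ (A k) ≠ ⊤ := by
    have := hS.tsum_ofReal_ne_top
    simpa [ofReal_measureReal] using this
  refine tendsto_of_tendsto_of_tendsto_of_le_of_le tendsto_const_nhds
    (ENNReal.tendsto_sum_nat_add (fun k => μ (A k)) hT) (fun _ => zero_le) (fun N => ?_)
  refine le_trans (measure_mono ?_) (measure_iUnion_le (fun k => A (k + N)))
  rintro ω ⟨k, hk, hω⟩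
  refine Set.mem_iUnion.2 ⟨k - N, ?_⟩
  rw [Nat.sub_add_cancel hk]
  exact hω
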